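/- In the ring of formal power series in two variables x, y over the rationals, the identity (1 - x - y - xy) · ∑_{p,q ≥ 0} D(p,q) x^p y^q = 1 holds; equivalently, ∑_{p,q ≥ 0} D(p,q) x^p y^q is the multiplicative inverse of 1 - x - y - xy. -/

import Mathlib

/-- The Delannoy numbers: `D(p,q) = ∑_{i=0}^{p} C(p,i) C(q,i) 2^i`. -/
def delannoy (p q : ℕ) : ℕ :=
  ∑ i ∈ Finset.range (p + 1), p.choose i * q.choose i * 2 ^ i

/-- The formal power series `∑_{p,q ≥ 0} D(p,q) x^p y^q` in two variables over `ℚ`,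
given by its coefficient function. -/
def delannoySeries : MvPowerSeries (Fin 2) ℚ :=
  fun e => (delannoy (e 0) (e 1) : ℚ)

/-!
By Pascal's rule in both arguments, the products `C(p,i) C(q,i)` satisfy a linear identity relating
the four corners of a unit square. Summing it against `(1 + w)^i` shows that
`∑ i, C(p,i) C(q,i) (1 + w)^i` obeys the recurrence of lattice paths with steps `(1,0)`, `(0,1)` and
`(1,1)`, the last of weight `w`. That recurrence and the boundary value `1` say exactly that
`1 - x - y - w x y` inverts the generating series; the Delannoy numbers are the case `w = 1`.
-/

theorem coeff_X_mul_eq_ite {σ R : Type*} [Semiring R] (s : σ) (φ : MvPowerSeries σ R)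
    (e : σ →₀ ℕ) :
    MvPowerSeries.coeff e (MvPowerSeries.X s * φ) =
      if e s = 0 then 0 else MvPowerSeries.coeff (e - Finsupp.single s 1) φ := by
  classical
  simp [MvPowerSeries.X_def, MvPowerSeries.coeff_monomial_mul, Nat.one_le_iff_ne_zero]

theorem choose_succ_mul_choose_succ_add (p q i : ℕ) :
    (p + 1).choose (i + 1) * (q + 1).choose (i + 1) + p.choose (i + 1) * q.choose (i + 1) =
      p.choose (i + 1) * (q + 1).choose (i + 1) + (p + 1).choose (i + 1) * q.choose (i + 1) +
        p.choose i * q.choose i := by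
  simp only [Nat.choose_succ_succ']
  ring

section Weighted

variable {R : Type*} [Semiring R]

/-- The weighted Delannoy number `∑ i, C(p,i) C(q,i) (1 + w)^i`, the total weight of the lattice
paths from `(0,0)` to `(p,q)` with steps `(1,0)` and `(0,1)` of weight `1` and `(1,1)` of weight
`w`. The closed form is taken as the definition, to match that of `delannoy`. -/
def weightedDelannoy (w : R) (p q : ℕ) : R :=
  ∑ i ∈ Finset.range (p + 1), (p.choose i * q.choose i : ℕ) * (1 + w) ^ i

theorem weightedDelannoy_one (p q : ℕ) : weightedDelannoy (1 : R) p q = delannoy p q := by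
  simp [weightedDelannoy, delannoy, one_add_one_eq_two]

theorem weightedDelannoy_zero_left (w : R) (q : ℕ) : weightedDelannoy w 0 q = 1 := by
  simp [weightedDelannoy]

theorem weightedDelannoy_zero_right (w : R) (p : ℕ) : weightedDelannoy w p 0 = 1 := by
  simp [weightedDelannoy, Finset.sum_range_succ']

theorem weightedDelannoy_eq_sum_range (w : R) {p n : ℕ} (hpn : p < n) (q : ℕ) :
    weightedDelannoy w p q =
      ∑ i ∈ Finset.range n, (p.choose i * q.choose i : ℕ) * (1 + w) ^ i := by
  refine (Finset.eventually_constant_sum (fun i hi ↦ ?_) hpn).symm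
  simp [Nat.choose_eq_zero_of_lt hi]

theorem weightedDelannoy_eq_sum_range_add_one (w : R) {p n : ℕ} (hpn : p ≤ n) (q : ℕ) :
    weightedDelannoy w p q =
      ∑ i ∈ Finset.range n, (p.choose (i + 1) * q.choose (i + 1) : ℕ) * (1 + w) ^ (i + 1) + 1 := by
  rw [weightedDelannoy_eq_sum_range w (Nat.lt_succ_of_le hpn), Finset.sum_range_succ']
  simp

/-- The generating series `∑ W(p,q) x^p y^q` of the weighted Delannoy numbers `W(p,q)`, given, like
`delannoySeries`, by its coefficient function. -/
def weightedDelannoySeries (w : R) : MvPowerSeries (Fin 2) R :=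
  fun e ↦ weightedDelannoy w (e 0) (e 1)

theorem coeff_weightedDelannoySeries (w : R) (e : Fin 2 →₀ ℕ) :
    MvPowerSeries.coeff e (weightedDelannoySeries w) = weightedDelannoy w (e 0) (e 1) :=
  rfl

theorem weightedDelannoySeries_one : weightedDelannoySeries (1 : ℚ) = delannoySeries :=
  funext fun e ↦ weightedDelannoy_one (e 0) (e 1)

end Weighted

theorem weightedDelannoy_succ_succ {R : Type*} [CommRing R] (w : R) (p q : ℕ) :
    weightedDelannoy w (p + 1) (q + 1) =
      weightedDelannoy w p (q + 1) + weightedDelannoy w (p + 1) q + w * weightedDelannoy w p q := by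
  let tail (a b : ℕ) : R :=
    ∑ i ∈ Finset.range (p + 1), (a.choose (i + 1) * b.choose (i + 1) : ℕ) * (1 + w) ^ (i + 1)
  have eq_tail {a : ℕ} (ha : a ≤ p + 1) (b : ℕ) : weightedDelannoy w a b = tail a b + 1 :=
    weightedDelannoy_eq_sum_range_add_one w ha b
  have tail_add_tail : tail (p + 1) (q + 1) + tail p q =
      tail p (q + 1) + tail (p + 1) q + (1 + w) * weightedDelannoy w p q := by
    simp only [tail, weightedDelannoy, Finset.mul_sum, ← Finset.sum_add_distrib]
    refine Finset.sum_congr rfl fun i _ ↦ ?_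
    have pascal := congrArg (Nat.cast : ℕ → R) (choose_succ_mul_choose_succ_add p q i)
    push_cast at pascal ⊢
    linear_combination (1 + w) ^ (i + 1) * pascal
  linear_combination tail_add_tail + eq_tail le_rfl (q + 1) - eq_tail p.le_succ (q + 1) -
    eq_tail le_rfl q + eq_tail p.le_succ q

theorem delannoy_generating_function_general {R : Type*} [CommRing R] (w : R) :
    (1 - MvPowerSeries.X 0 - MvPowerSeries.X 1
        - MvPowerSeries.C w * (MvPowerSeries.X 0 * MvPowerSeries.X 1) : MvPowerSeries (Fin 2) R) *
      weightedDelannoySeries w = 1 := by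
  ext e
  have e_eq_zero_iff : e = 0 ↔ e 0 = 0 ∧ e 1 = 0 := by
    simp [Finsupp.ext_iff, Fin.forall_fin_two]
  simp only [sub_mul, one_mul, mul_assoc, map_sub, MvPowerSeries.coeff_C_mul, coeff_X_mul_eq_ite,
    coeff_weightedDelannoySeries, MvPowerSeries.coeff_one, e_eq_zero_iff, Finsupp.tsub_apply,
    Finsupp.single_apply]
  rcases e 0 with _ | p <;> rcases e 1 with _ | q
  case succ.succ =>
    simp only [Nat.add_eq_zero_iff, one_ne_zero, zero_ne_one, and_false, and_self, ↓reduceIte,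
      add_tsub_cancel_right, tsub_zero]
    linear_combination weightedDelannoy_succ_succ w p q
  all_goals simp [weightedDelannoy_zero_left, weightedDelannoy_zero_right]

/-- The generating-function identity
`(1 - x - y - xy) · ∑_{p,q ≥ 0} D(p,q) x^p y^q = 1` in `ℚ[[x, y]]`. -/
theorem delannoy_generating_function :
    (1 - MvPowerSeries.X 0 - MvPowerSeries.X 1
        - MvPowerSeries.X 0 * MvPowerSeries.X 1 : MvPowerSeries (Fin 2) ℚ) *
      delannoySeries = 1 := by
  simpa [weightedDelannoySeries_one] using delannoy_generating_function_general (1 : ℚ)
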